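/- Let d ≥ 1 and 1 ≤ q ≤ α ≤ p ≤ ∞. If {(c_n, ρ_n, f_n)}_{n≥1} is an 𝔥-decomposition of f ∈ 𝓗(q,p,α), then the partial sums (Σ_{n=1}^m c_n St^{(α')}_{ρ_n} f_n)_{m≥1}, which lie in (L^{q'},ℓ^{p'})(ℝ^d), converge to f in the norm of 𝓗(q,p,α). Consequently (L^{q'},ℓ^{p'})(ℝ^d) is a dense subspace of 𝓗(q,p,α). -/

import Mathlib

/-!
The tail of an 𝔥-decomposition of `f`, shifted to start at index `m`, is an 𝔥-decomposition of
`f` minus its `m`-th partial sum. Hence the `𝓗`-norm of that difference is at most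
`∑_{n ≥ m} |c_n|`, which tends to `0`.

The remaining point is that the partial sums lie in the amalgam space, and for this it is enough
that the amalgam space is a vector space stable under dilations. Stability under dilation is a
counting argument (`amalgamNorm_St_ne_top`): the unit cube at `k` meets boundedly many cubes
`ρ I_j`, and each `ρ I_j` meets boundedly many unit cubes. So the local norms of the dilated
function on `I_k` are dominated by a sum of boundedly many local norms of the original function,
up to the constant by which a dilation multiplies the `L^q` norm (`eLpNorm_St_le`), and such a
sum with finite overlap preserves `ℓ^p` (`FinEll.sum`).
-/

open MeasureTheory Filter Topology ENNReal

noncomputable section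

/-- Dilation operator `St^{(α)}_ρ f (x) = ρ^{-d/α} f(x/ρ)` on functions on `ℝ^d`. -/
def St (d : ℕ) (α : ℝ≥0∞) (ρ : ℝ) (f : (Fin d → ℝ) → ℂ) : (Fin d → ℝ) → ℂ :=
  fun x => (ρ ^ (-(d : ℝ) * (1 / α).toReal) : ℝ) • f (ρ⁻¹ • x)

/-- The cube `I^ρ_k = Π_j [k_j ρ, (k_j+1) ρ)`. -/
def cube (d : ℕ) (ρ : ℝ) (k : Fin d → ℤ) : Set (Fin d → ℝ) :=
  Set.univ.pi fun j => Set.Ico ((k j : ℝ) * ρ) (((k j : ℝ) + 1) * ρ)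

/-- The amalgam norm `_ρ‖f‖_{q,p}`. -/
def amalgamNorm (d : ℕ) (q p : ℝ≥0∞) (ρ : ℝ) (f : (Fin d → ℝ) → ℂ) : ℝ≥0∞ :=
  if p = ∞ then ⨆ k : Fin d → ℤ, eLpNorm ((cube d ρ k).indicator f) q volume
  else (∑' k : Fin d → ℤ,
      (eLpNorm ((cube d ρ k).indicator f) q volume) ^ p.toReal) ^ (1 / p.toReal)

/-- The Fofana norm `‖f‖_{q,p,α} = sup_{ρ>0} ρ^{d(1/α-1/q)} · _ρ‖f‖_{q,p}`. -/
def fofanaNorm (d : ℕ) (q p α : ℝ≥0∞) (f : (Fin d → ℝ) → ℂ) : ℝ≥0∞ :=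
  ⨆ (ρ : ℝ) (_ : 0 < ρ),
    ENNReal.ofReal (ρ ^ ((d : ℝ) * ((1 / α).toReal - (1 / q).toReal))) *
      amalgamNorm d q p ρ f

/-- `{(c n, ρ n, g n)}` is an 𝔥-decomposition of `f` (for the space `𝓗(q,p,α)`,
here parametrized by the conjugate exponents `q', p', α'`):
`Σ |c_n| < ∞`, each `g n` is in the unit ball of the amalgam space `(L^{q'}, ℓ^{p'})`,
and `f = Σ_n c_n St^{(α')}_{ρ_n} g_n` in the sense of `L^1_loc`. -/
structure IsHDecomp (d : ℕ) (q' p' α' : ℝ≥0∞) (f : (Fin d → ℝ) → ℂ)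
    (c : ℕ → ℂ) (ρ : ℕ → ℝ) (g : ℕ → (Fin d → ℝ) → ℂ) : Prop where
  summable : Summable fun n => ‖c n‖
  rho_pos : ∀ n, 0 < ρ n
  loc_int : ∀ n, LocallyIntegrable (g n) volume
  norm_le : ∀ n, amalgamNorm d q' p' 1 (g n) ≤ 1
  f_loc_int : LocallyIntegrable f volume
  tendsto : ∀ K : Set (Fin d → ℝ), IsCompact K →
    Tendsto (fun m => ∫ x in K, ‖(∑ n ∈ Finset.range m, c n • St d α' (ρ n) (g n)) x - f x‖)
      atTop (𝓝 0)

/-- Membership in the space `𝓗(q,p,α)` (parametrized by conjugate exponents). -/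
def MemH (d : ℕ) (q' p' α' : ℝ≥0∞) (f : (Fin d → ℝ) → ℂ) : Prop :=
  ∃ c ρ g, IsHDecomp d q' p' α' f c ρ g

/-- The norm of `𝓗(q,p,α)`:  `inf Σ|c_n|` over all 𝔥-decompositions. -/
def HNorm (d : ℕ) (q' p' α' : ℝ≥0∞) (f : (Fin d → ℝ) → ℂ) : ℝ≥0∞ :=
  sInf {s | ∃ c ρ g, IsHDecomp d q' p' α' f c ρ g ∧ s = ∑' n, ENNReal.ofReal ‖c n‖}

end
/-! ### Finiteness of `ℓ^p` norms -/

/-- `a` has finite `ℓ^p` norm; for `p = ∞` this means that `a` is uniformly bounded by a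
finite constant. -/
def FinEll {ι : Type*} (p : ℝ≥0∞) (a : ι → ℝ≥0∞) : Prop :=
  if p = ∞ then (⨆ k, a k) ≠ ∞ else (∑' k, a k ^ p.toReal) ≠ ∞

lemma one_le_toReal_of_ne_top {p : ℝ≥0∞} (hp : 1 ≤ p) (h : p ≠ ∞) : 1 ≤ p.toReal := by
  simpa using (ENNReal.toReal_le_toReal ENNReal.one_ne_top h).2 hp

lemma amalgamNorm_ne_top_iff {d : ℕ} {q p : ℝ≥0∞} (hp : 1 ≤ p) {f : (Fin d → ℝ) → ℂ} :
    amalgamNorm d q p 1 f ≠ ∞ ↔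
      FinEll p (fun k => eLpNorm ((cube d 1 k).indicator f) q volume) := by
  unfold amalgamNorm FinEll
  split_ifs with h
  · rfl
  · have h1 := one_le_toReal_of_ne_top hp h
    have h0 : 0 < 1 / p.toReal := by positivity
    rw [Ne, ENNReal.rpow_eq_top_iff_of_pos h0]

lemma FinEll.mono {ι : Type*} {p : ℝ≥0∞} {a b : ι → ℝ≥0∞} (hb : FinEll p b)
    (hab : ∀ k, a k ≤ b k) : FinEll p a := by
  unfold FinEll at *
  split_ifs with h
  · rw [if_pos h] at hb
    exact ne_top_of_le_ne_top hb (iSup_mono hab)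
  · rw [if_neg h] at hb
    exact ne_top_of_le_ne_top hb
      (ENNReal.tsum_le_tsum fun k => ENNReal.rpow_le_rpow (hab k) ENNReal.toReal_nonneg)

lemma FinEll.const_mul {ι : Type*} {p : ℝ≥0∞} {a : ι → ℝ≥0∞} (ha : FinEll p a)
    {C : ℝ≥0∞} (hC : C ≠ ∞) : FinEll p (fun k => C * a k) := by
  unfold FinEll at *
  split_ifs with h
  · rw [if_pos h] at ha
    rw [← ENNReal.mul_iSup]
    exact ENNReal.mul_ne_top hC ha
  · rw [if_neg h] at ha
    simp_rw [ENNReal.mul_rpow_of_nonneg _ _ ENNReal.toReal_nonneg]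
    rw [ENNReal.tsum_mul_left]
    exact ENNReal.mul_ne_top (ENNReal.rpow_ne_top_of_nonneg ENNReal.toReal_nonneg hC) ha

lemma FinEll.zero {ι : Type*} {p : ℝ≥0∞} (hp : 1 ≤ p) : FinEll p (fun _ : ι => (0 : ℝ≥0∞)) := by
  unfold FinEll
  split_ifs with h
  · simp
  · have h1 := one_le_toReal_of_ne_top hp h
    have h0 : 0 < p.toReal := by positivity
    simp [ENNReal.zero_rpow_of_pos h0]

lemma FinEll.add {ι : Type*} {p : ℝ≥0∞} (hp : 1 ≤ p) {a b : ι → ℝ≥0∞} (ha : FinEll p a)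
    (hb : FinEll p b) : FinEll p (fun k => a k + b k) := by
  unfold FinEll at *
  split_ifs with h
  · rw [if_pos h] at ha hb
    exact ne_top_of_le_ne_top (ENNReal.add_ne_top.2 ⟨ha, hb⟩)
      (iSup_le fun k => add_le_add (le_iSup a k) (le_iSup b k))
  · rw [if_neg h] at ha hb
    have h1 := one_le_toReal_of_ne_top hp h
    refine ne_top_of_le_ne_top ?_ (ENNReal.tsum_le_tsum fun k =>
      ENNReal.rpow_add_le_mul_rpow_add_rpow (a k) (b k) h1)
    rw [ENNReal.tsum_mul_left, ENNReal.tsum_add]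
    exact ENNReal.mul_ne_top
      (ENNReal.rpow_ne_top_of_nonneg (by linarith) ENNReal.ofNat_ne_top)
      (ENNReal.add_ne_top.2 ⟨ha, hb⟩)

/-- Summing an `ℓ^p` family over finite sets `J k` of bounded size preserves `ℓ^p`, provided
every index belongs to boundedly many of the `J k`. -/
lemma FinEll.sum {ι : Type*} {p : ℝ≥0∞} (hp : 1 ≤ p) {a : ι → ℝ≥0∞}
    (ha : FinEll p a) (J T : ι → Finset ι) (N M : ℕ) (hJ : ∀ k, (J k).card ≤ N)
    (hT : ∀ j, (T j).card ≤ M) (hJT : ∀ k j, j ∈ J k → k ∈ T j) :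
    FinEll p (fun k => ∑ j ∈ J k, a j) := by
  classical
  unfold FinEll at *
  split_ifs with h
  · rw [if_pos h] at ha
    refine ne_top_of_le_ne_top (ENNReal.mul_ne_top (ENNReal.natCast_ne_top N) ha)
      (iSup_le fun k => ?_)
    calc ∑ j ∈ J k, a j ≤ ∑ j ∈ J k, ⨆ i, a i := Finset.sum_le_sum fun j _ => le_iSup a j
      _ = ((J k).card : ℝ≥0∞) * ⨆ i, a i := by rw [Finset.sum_const, nsmul_eq_mul]
      _ ≤ N * ⨆ i, a i := by gcongr; exact hJ k
  · rw [if_neg h] at ha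
    have h1 := one_le_toReal_of_ne_top hp h
    have h0 : 0 ≤ p.toReal - 1 := by linarith
    have hfin : (N : ℝ≥0∞) ^ (p.toReal - 1) * (M * ∑' j, a j ^ p.toReal) ≠ ∞ :=
      ENNReal.mul_ne_top (ENNReal.rpow_ne_top_of_nonneg h0 (ENNReal.natCast_ne_top N))
        (ENNReal.mul_ne_top (ENNReal.natCast_ne_top M) ha)
    refine ne_top_of_le_ne_top hfin ?_
    calc ∑' k, (∑ j ∈ J k, a j) ^ p.toReal
        ≤ ∑' k, (N : ℝ≥0∞) ^ (p.toReal - 1) * ∑ j ∈ J k, a j ^ p.toReal := by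
          refine ENNReal.tsum_le_tsum fun k =>
            (ENNReal.rpow_sum_le_const_mul_sum_rpow (J k) a h1).trans ?_
          gcongr
          exact hJ k
      _ = (N : ℝ≥0∞) ^ (p.toReal - 1) * ∑' k, ∑' j, if j ∈ J k then a j ^ p.toReal else 0 := by
          rw [ENNReal.tsum_mul_left]
          congr 1
          refine tsum_congr fun k => ?_
          rw [tsum_eq_sum (s := J k) (fun j hj => if_neg hj)]
          exact Finset.sum_congr rfl fun j hj => (if_pos hj).symm
      _ ≤ (N : ℝ≥0∞) ^ (p.toReal - 1) * (M * ∑' j, a j ^ p.toReal) := by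
          gcongr
          rw [ENNReal.tsum_comm, ← ENNReal.tsum_mul_left]
          refine ENNReal.tsum_le_tsum fun j => ?_
          rw [tsum_eq_sum (s := T j) (fun k hk => if_neg fun hj => hk (hJT k j hj))]
          calc ∑ k ∈ T j, (if j ∈ J k then a j ^ p.toReal else 0)
              ≤ ∑ k ∈ T j, a j ^ p.toReal := by
                refine Finset.sum_le_sum fun k _ => ?_
                split_ifs <;> simp
            _ = ((T j).card : ℝ≥0∞) * a j ^ p.toReal := by rw [Finset.sum_const, nsmul_eq_mul]
            _ ≤ M * a j ^ p.toReal := by gcongr; exact hT j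

/-! ### Dilations -/

lemma measurableSet_cube (d : ℕ) (ρ : ℝ) (k : Fin d → ℤ) : MeasurableSet (cube d ρ k) :=
  MeasurableSet.univ_pi fun _ => measurableSet_Ico

lemma mem_cube_one_iff {d : ℕ} {k : Fin d → ℤ} {x : Fin d → ℝ} :
    x ∈ cube d 1 k ↔ ∀ i, ⌊x i⌋ = k i := by
  simp [cube, Int.floor_eq_iff]

lemma map_smul_volume {d : ℕ} {ρ : ℝ} (hρ : ρ ≠ 0) :
    Measure.map (fun x : Fin d → ℝ => ρ⁻¹ • x) volume =
      ENNReal.ofReal |((ρ⁻¹) ^ d)⁻¹| • (volume : Measure (Fin d → ℝ)) := by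
  simpa using Measure.map_addHaar_smul (volume : Measure (Fin d → ℝ)) (inv_ne_zero hρ)

lemma locallyIntegrable_St {d : ℕ} {α : ℝ≥0∞} {ρ : ℝ} (hρ : 0 < ρ) {f : (Fin d → ℝ) → ℂ}
    (hf : LocallyIntegrable f volume) : LocallyIntegrable (St d α ρ f) volume := by
  let e : (Fin d → ℝ) ≃ₜ (Fin d → ℝ) := Homeomorph.smulOfNeZero ρ⁻¹ (inv_ne_zero hρ.ne')
  have h1 : LocallyIntegrable f (Measure.map e volume) := by
    have : Measure.map e volume = _ := map_smul_volume (d := d) hρ.ne'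
    rw [this]
    intro x
    obtain ⟨s, hs, hi⟩ := hf x
    refine ⟨s, hs, ?_⟩
    rw [IntegrableOn, Measure.restrict_smul]
    exact Integrable.smul_measure hi ENNReal.ofReal_ne_top
  exact ((locallyIntegrable_map_homeomorph e).1 h1).smul
    (ρ ^ (-(d : ℝ) * (1 / α).toReal) : ℝ)

/-- A dilation is bounded on `L^q`, uniformly in the function. -/
lemma eLpNorm_St_le (d : ℕ) (α q : ℝ≥0∞) {ρ : ℝ} (hρ : 0 < ρ) :
    ∃ C : ℝ≥0∞, C ≠ ∞ ∧ ∀ f : (Fin d → ℝ) → ℂ,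
      eLpNorm (St d α ρ f) q volume ≤ C * eLpNorm f q volume := by
  refine ⟨‖(ρ ^ (-(d : ℝ) * (1 / α).toReal) : ℝ)‖ₑ *
    ENNReal.ofReal |((ρ⁻¹) ^ d)⁻¹| ^ (1 / q).toReal,
    ENNReal.mul_ne_top enorm_ne_top
      (ENNReal.rpow_ne_top_of_nonneg ENNReal.toReal_nonneg ENNReal.ofReal_ne_top),
    fun f => le_of_eq ?_⟩
  let e : (Fin d → ℝ) ≃ₜ (Fin d → ℝ) := Homeomorph.smulOfNeZero ρ⁻¹ (inv_ne_zero hρ.ne')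
  have hmap : Measure.map e volume = _ := map_smul_volume (d := d) hρ.ne'
  have h1 : eLpNorm (f ∘ e) q volume = eLpNorm f q (Measure.map e volume) :=
    (e.measurableEmbedding.eLpNorm_map_measure).symm
  have hc : ENNReal.ofReal |((ρ⁻¹) ^ d)⁻¹| ≠ 0 := by
    rw [Ne, ENNReal.ofReal_eq_zero, not_le]
    positivity
  rw [hmap, eLpNorm_smul_measure_of_ne_zero hc] at h1
  have h2 : St d α ρ f = (ρ ^ (-(d : ℝ) * (1 / α).toReal) : ℝ) • (f ∘ e) := rfl
  rw [h2, eLpNorm_const_smul, h1, smul_eq_mul, mul_assoc]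

/-- The amalgam space is stable under dilations. -/
lemma amalgamNorm_St_ne_top {d : ℕ} {α q p : ℝ≥0∞} (hq : 1 ≤ q) (hp : 1 ≤ p) {ρ : ℝ}
    (hρ : 0 < ρ) {f : (Fin d → ℝ) → ℂ} (hf : LocallyIntegrable f volume)
    (hfin : amalgamNorm d q p 1 f ≠ ∞) : amalgamNorm d q p 1 (St d α ρ f) ≠ ∞ := by
  classical
  rw [amalgamNorm_ne_top_iff hp] at hfin ⊢
  obtain ⟨C, hC, hSt⟩ := eLpNorm_St_le d α q hρ
  obtain ⟨R, hR⟩ := exists_nat_ge (ρ⁻¹ + 1)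
  obtain ⟨S, hS⟩ := exists_nat_ge (ρ * (R + 1) + 1)
  -- `J k` contains every `j` such that `ρ I_j` meets `I_k`.
  let J : (Fin d → ℤ) → Finset (Fin d → ℤ) := fun k =>
    Fintype.piFinset fun i => Finset.Icc ⌊ρ⁻¹ * k i⌋ (⌊ρ⁻¹ * k i⌋ + R)
  -- `T j` contains every `k` such that `j ∈ J k`.
  let T : (Fin d → ℤ) → Finset (Fin d → ℤ) := fun j =>
    Fintype.piFinset fun i => Finset.Icc ⌊ρ * (j i - R)⌋ (⌊ρ * (j i - R)⌋ + S)
  have hJ : ∀ k, (J k).card ≤ (R + 1) ^ d := fun k => by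
    have (z : ℤ) : (z + R + 1 - z).toNat = R + 1 := by omega
    simp [J, Fintype.card_piFinset, this]
  have hT : ∀ k, (T k).card ≤ (S + 1) ^ d := fun k => by
    have (z : ℤ) : (z + S + 1 - z).toNat = S + 1 := by omega
    simp [T, Fintype.card_piFinset, this]
  have hJT : ∀ k j, j ∈ J k → k ∈ T j := by
    intro k j hj
    simp only [J, T, Fintype.mem_piFinset, Finset.mem_Icc] at hj ⊢
    intro i
    obtain ⟨h1, h2⟩ := hj i
    have a1 : ρ⁻¹ * (k i : ℝ) < j i + 1 := by
      have := Int.lt_floor_add_one (ρ⁻¹ * (k i : ℝ))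
      have h1' : ((⌊ρ⁻¹ * (k i : ℝ)⌋ : ℤ) : ℝ) ≤ j i := by exact_mod_cast h1
      linarith
    have a2 : (j i : ℝ) - R ≤ ρ⁻¹ * (k i : ℝ) := by
      have := Int.floor_le (ρ⁻¹ * (k i : ℝ))
      have h2' : (j i : ℝ) ≤ (⌊ρ⁻¹ * (k i : ℝ)⌋ : ℤ) + R := by exact_mod_cast h2
      linarith
    have b1 : (k i : ℝ) < ρ * (j i + 1) := by
      rwa [inv_mul_lt_iff₀ hρ] at a1
    have b2 : ρ * ((j i : ℝ) - R) ≤ k i := by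
      rwa [le_inv_mul_iff₀ hρ] at a2
    constructor
    · have := (Int.floor_le (ρ * ((j i : ℝ) - R))).trans b2
      exact_mod_cast this
    · have := Int.lt_floor_add_one (ρ * ((j i : ℝ) - R))
      have h3 : (k i : ℝ) ≤ (⌊ρ * ((j i : ℝ) - R)⌋ : ℤ) + S := by nlinarith
      exact_mod_cast h3
  refine ((hfin.sum hp J T _ _ hJ hT hJT).const_mul hC).mono fun k => ?_
  have hpt : ∀ x, ‖(cube d 1 k).indicator (St d α ρ f) x‖ₑ ≤
      ‖(∑ j ∈ J k, St d α ρ ((cube d 1 j).indicator f)) x‖ₑ := by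
    intro x
    by_cases hx : x ∈ cube d 1 k
    · -- Exactly one of the cubes `ρ I_j` contains `x`, so the sum has a single nonzero term.
      have hx' := mem_cube_one_iff.1 hx
      rw [Set.indicator_of_mem hx, Finset.sum_apply,
        Finset.sum_eq_single (fun i => ⌊(ρ⁻¹ • x) i⌋)]
      · rw [St, St, Set.indicator_of_mem (mem_cube_one_iff.2 fun i => rfl)]
      · intro j _ hj
        rw [St, Set.indicator_of_notMem, smul_zero]
        intro hmem
        exact hj (funext fun i => (mem_cube_one_iff.1 hmem i).symm)
      · intro hn
        refine absurd ?_ hn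
        simp only [J, Fintype.mem_piFinset, Finset.mem_Icc, Pi.smul_apply, smul_eq_mul]
        intro i
        have hk := Int.floor_eq_iff.1 (hx' i)
        have hρ' : 0 < ρ⁻¹ := inv_pos.2 hρ
        refine ⟨Int.floor_le_floor (by gcongr; exact hk.1), ?_⟩
        have h1 := Int.floor_le (ρ⁻¹ * x i)
        have h2 := Int.lt_floor_add_one (ρ⁻¹ * (k i : ℝ))
        have h3 : ((⌊ρ⁻¹ * x i⌋ : ℤ) : ℝ) < (⌊ρ⁻¹ * (k i : ℝ)⌋ : ℤ) + R + 1 := by nlinarith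
        have h4 : ⌊ρ⁻¹ * x i⌋ < ⌊ρ⁻¹ * (k i : ℝ)⌋ + R + 1 := by exact_mod_cast h3
        omega
    · simp [Set.indicator_of_notMem hx]
  calc eLpNorm ((cube d 1 k).indicator (St d α ρ f)) q volume
      ≤ eLpNorm (∑ j ∈ J k, St d α ρ ((cube d 1 j).indicator f)) q volume :=
        eLpNorm_mono_enorm hpt
    _ ≤ ∑ j ∈ J k, eLpNorm (St d α ρ ((cube d 1 j).indicator f)) q volume := by
        refine eLpNorm_sum_le (fun j _ => ?_) hq
        exact (locallyIntegrable_St hρ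
          (hf.indicator (measurableSet_cube d 1 j))).aestronglyMeasurable
    _ ≤ ∑ j ∈ J k, C * eLpNorm ((cube d 1 j).indicator f) q volume :=
        Finset.sum_le_sum fun j _ => hSt _
    _ = C * ∑ j ∈ J k, eLpNorm ((cube d 1 j).indicator f) q volume := by
        rw [Finset.mul_sum]

/-! ### Vector space structure of the amalgam space -/

lemma amalgamNorm_add_ne_top {d : ℕ} {q p : ℝ≥0∞} (hq : 1 ≤ q) (hp : 1 ≤ p)
    {f g : (Fin d → ℝ) → ℂ} (hf : LocallyIntegrable f volume) (hg : LocallyIntegrable g volume)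
    (hf' : amalgamNorm d q p 1 f ≠ ∞) (hg' : amalgamNorm d q p 1 g ≠ ∞) :
    amalgamNorm d q p 1 (f + g) ≠ ∞ := by
  rw [amalgamNorm_ne_top_iff hp] at *
  refine (hf'.add hp hg').mono fun k => ?_
  rw [Set.indicator_add']
  exact eLpNorm_add_le (hf.indicator (measurableSet_cube d 1 k)).aestronglyMeasurable
    (hg.indicator (measurableSet_cube d 1 k)).aestronglyMeasurable hq

lemma amalgamNorm_smul_ne_top {d : ℕ} {q p : ℝ≥0∞} (hp : 1 ≤ p)
    {f : (Fin d → ℝ) → ℂ} (hf' : amalgamNorm d q p 1 f ≠ ∞) (c : ℂ) :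
    amalgamNorm d q p 1 (c • f) ≠ ∞ := by
  rw [amalgamNorm_ne_top_iff hp] at *
  refine (hf'.const_mul (C := ‖c‖ₑ) enorm_ne_top).mono fun k => ?_
  have : (cube d 1 k).indicator (c • f) = c • (cube d 1 k).indicator f :=
    Set.indicator_const_smul (cube d 1 k) c f
  rw [this, eLpNorm_const_smul]

lemma amalgamNorm_zero_ne_top {d : ℕ} {q p : ℝ≥0∞} (hp : 1 ≤ p) :
    amalgamNorm d q p 1 (0 : (Fin d → ℝ) → ℂ) ≠ ∞ := by
  rw [amalgamNorm_ne_top_iff hp]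
  simpa using FinEll.zero hp

/-! ### Partial sums and tails of 𝔥-decompositions -/

/-- The partial sums of an 𝔥-decomposition are locally integrable and lie in the amalgam
space. -/
lemma IsHDecomp.partialSum {d : ℕ} {q' p' α' : ℝ≥0∞} (hq : 1 ≤ q') (hp : 1 ≤ p')
    {f : (Fin d → ℝ) → ℂ} {c : ℕ → ℂ} {r : ℕ → ℝ} {g : ℕ → (Fin d → ℝ) → ℂ}
    (h : IsHDecomp d q' p' α' f c r g) (m : ℕ) :
    LocallyIntegrable (∑ n ∈ Finset.range m, c n • St d α' (r n) (g n)) volume ∧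
      amalgamNorm d q' p' 1 (∑ n ∈ Finset.range m, c n • St d α' (r n) (g n)) ≠ ∞ := by
  induction m with
  | zero =>
    simp only [Finset.range_zero, Finset.sum_empty]
    exact ⟨locallyIntegrable_zero, amalgamNorm_zero_ne_top hp⟩
  | succ m ih =>
    rw [Finset.sum_range_succ]
    have hl := (locallyIntegrable_St (α := α') (h.rho_pos m) (h.loc_int m)).smul (c m)
    exact ⟨ih.1.add hl, amalgamNorm_add_ne_top hq hp ih.1 hl ih.2
      (amalgamNorm_smul_ne_top hp (amalgamNorm_St_ne_top hq hp (h.rho_pos m) (h.loc_int m)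
        (ne_top_of_le_ne_top ENNReal.one_ne_top (h.norm_le m))) _)⟩

/-- The tail of an 𝔥-decomposition decomposes the remainder. -/
lemma IsHDecomp.tail {d : ℕ} {q' p' α' : ℝ≥0∞} (hq : 1 ≤ q') (hp : 1 ≤ p')
    {f : (Fin d → ℝ) → ℂ} {c : ℕ → ℂ} {r : ℕ → ℝ} {g : ℕ → (Fin d → ℝ) → ℂ}
    (h : IsHDecomp d q' p' α' f c r g) (m : ℕ) :
    IsHDecomp d q' p' α' (f - ∑ n ∈ Finset.range m, c n • St d α' (r n) (g n))
      (fun n => c (n + m)) (fun n => r (n + m)) (fun n => g (n + m)) where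
  summable := (summable_nat_add_iff m).2 h.summable
  rho_pos n := h.rho_pos _
  loc_int n := h.loc_int _
  norm_le n := h.norm_le _
  f_loc_int := h.f_loc_int.sub (h.partialSum hq hp m).1
  tendsto K hK := by
    refine ((h.tendsto K hK).comp (tendsto_add_atTop_nat m)).congr fun M => ?_
    simp only [Function.comp_apply]
    congr 1
    funext x
    congr 1
    have : ∑ n ∈ Finset.range (M + m), c n • St d α' (r n) (g n) =
        ∑ n ∈ Finset.range m, c n • St d α' (r n) (g n) +
          ∑ n ∈ Finset.range M, c (n + m) • St d α' (r (n + m)) (g (n + m)) := by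
      rw [add_comm M m, Finset.sum_range_add]
      simp only [add_comm m]
    rw [this, Pi.add_apply, Pi.sub_apply]
    ring

lemma IsHDecomp.tendsto_HNorm {d : ℕ} {q' p' α' : ℝ≥0∞} (hq : 1 ≤ q') (hp : 1 ≤ p')
    {f : (Fin d → ℝ) → ℂ} {c : ℕ → ℂ} {r : ℕ → ℝ} {g : ℕ → (Fin d → ℝ) → ℂ}
    (h : IsHDecomp d q' p' α' f c r g) :
    Tendsto (fun m =>
      HNorm d q' p' α' (f - ∑ n ∈ Finset.range m, c n • St d α' (r n) (g n)))
      atTop (𝓝 0) := by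
  have ht := ENNReal.tendsto_sum_nat_add (fun n => ENNReal.ofReal ‖c n‖)
    h.summable.tsum_ofReal_ne_top
  exact tendsto_of_tendsto_of_tendsto_of_le_of_le tendsto_const_nhds ht (fun _ => zero_le)
    fun m => sInf_le ⟨_, _, _, h.tail hq hp m, rfl⟩

/-- A conjugate exponent is at least `1`. -/
lemma one_le_of_conj {q q' : ℝ≥0∞} (h : 1 / q + 1 / q' = 1) : 1 ≤ q' := by
  have : 1 / q' ≤ 1 := le_add_self.trans h.le
  simpa using this

/-- If `{(c_n,ρ_n,g_n)}` is an 𝔥-decomposition of `f ∈ 𝓗(q,p,α)` then the partial sums,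
which lie in `(L^{q'},ℓ^{p'})(ℝ^d)`, converge to `f` in the norm of `𝓗(q,p,α)`.
Consequently `(L^{q'},ℓ^{p'})(ℝ^d)` is dense in `𝓗(q,p,α)`. -/
theorem amalgam_dense_in_H
    (d : ℕ) (hd : 1 ≤ d) (q p α q' p' α' : ℝ≥0∞)
    (hq : 1 ≤ q) (hqα : q ≤ α) (hαp : α ≤ p)
    (hqq' : 1 / q + 1 / q' = 1) (hpp' : 1 / p + 1 / p' = 1) (hαα' : 1 / α + 1 / α' = 1) :
    (∀ (f : (Fin d → ℝ) → ℂ) (c : ℕ → ℂ) (r : ℕ → ℝ) (g : ℕ → (Fin d → ℝ) → ℂ),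
      IsHDecomp d q' p' α' f c r g →
      (∀ m : ℕ, amalgamNorm d q' p' 1 (∑ n ∈ Finset.range m, c n • St d α' (r n) (g n)) ≠ ∞) ∧
        Tendsto (fun m =>
            HNorm d q' p' α' (f - ∑ n ∈ Finset.range m, c n • St d α' (r n) (g n)))
          atTop (𝓝 0)) ∧
    ∀ f : (Fin d → ℝ) → ℂ, MemH d q' p' α' f → ∀ ε : ℝ≥0∞, 0 < ε →
      ∃ h : (Fin d → ℝ) → ℂ, LocallyIntegrable h volume ∧
        amalgamNorm d q' p' 1 h ≠ ∞ ∧ MemH d q' p' α' (f - h) ∧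
        HNorm d q' p' α' (f - h) < ε := by
  have hq1 := one_le_of_conj hqq'
  have hp1 := one_le_of_conj hpp'
  refine ⟨fun f c r g h => ⟨fun m => (h.partialSum hq1 hp1 m).2, h.tendsto_HNorm hq1 hp1⟩, ?_⟩
  rintro f ⟨c, r, g, h⟩ ε hε
  obtain ⟨m, hm⟩ := ((h.tendsto_HNorm hq1 hp1).eventually_lt_const hε).exists
  exact ⟨_, (h.partialSum hq1 hp1 m).1, (h.partialSum hq1 hp1 m).2,
    ⟨_, _, _, h.tail hq1 hp1 m⟩, hm⟩
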